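/- In the algebra SLF(Ū_q) with convolution product, G_s G_t = 0 for all 1 ≤ s, t ≤ p−1. -/

import Mathlib

noncomputable section

open scoped TensorProduct

namespace Uqsl2

/-- Generators of the restricted quantum group. -/
inductive gen : Type | E | F | K | Kinv

/-- The primitive `2p`-th root of unity `q = e^{iπ/p}`. -/
def q (p : ℕ) : ℂ := Complex.exp (Real.pi * Complex.I / p)

/-- The `q`-integer `[n] = (q^n - q^{-n})/(q - q^{-1})`. -/
def qi (p : ℕ) (n : ℤ) : ℂ := (q p ^ n - q p ^ (-n)) / (q p - (q p)⁻¹)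

/-- The `q`-factorial `[m]!`. -/
def qfact (p m : ℕ) : ℂ := ∏ i ∈ Finset.range m, qi p (i + 1)

open FreeAlgebra in
/-- The defining relations of `Ū_q(sl₂)`. -/
inductive rel (p : ℕ) : FreeAlgebra ℂ gen → FreeAlgebra ℂ gen → Prop
  | KKinv : rel p (ι ℂ gen.K * ι ℂ gen.Kinv) 1
  | KinvK : rel p (ι ℂ gen.Kinv * ι ℂ gen.K) 1
  | Ep : rel p (ι ℂ gen.E ^ p) 0
  | Fp : rel p (ι ℂ gen.F ^ p) 0
  | K2p : rel p (ι ℂ gen.K ^ (2 * p)) 1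
  | KE : rel p (ι ℂ gen.K * ι ℂ gen.E) (q p ^ 2 • (ι ℂ gen.E * ι ℂ gen.K))
  | KF : rel p (ι ℂ gen.K * ι ℂ gen.F) ((q p ^ 2)⁻¹ • (ι ℂ gen.F * ι ℂ gen.K))
  | EF : rel p (ι ℂ gen.E * ι ℂ gen.F - ι ℂ gen.F * ι ℂ gen.E)
             ((q p - (q p)⁻¹)⁻¹ • (ι ℂ gen.K - ι ℂ gen.Kinv))

/-- The restricted quantum group `Ū_q(sl₂)`, presented by generators and relations. -/
abbrev Uq (p : ℕ) := RingQuot (rel p)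

def EE (p : ℕ) : Uq p := RingQuot.mkAlgHom ℂ (rel p) (FreeAlgebra.ι ℂ gen.E)
def FF (p : ℕ) : Uq p := RingQuot.mkAlgHom ℂ (rel p) (FreeAlgebra.ι ℂ gen.F)
def KK (p : ℕ) : Uq p := RingQuot.mkAlgHom ℂ (rel p) (FreeAlgebra.ι ℂ gen.K)
def KKinv (p : ℕ) : Uq p := RingQuot.mkAlgHom ℂ (rel p) (FreeAlgebra.ι ℂ gen.Kinv)

/-! ### The simple modules `X^α(s)` as matrix representations -/

/-- Matrix of `K` on `X^α(s)` in the canonical basis. -/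
def XK (p : ℕ) (α : ℂ) (s : ℕ) : Matrix (Fin s) (Fin s) ℂ :=
  Matrix.diagonal fun i => α * q p ^ ((s : ℤ) - 1 - 2 * (i : ℕ))

/-- Matrix of `E` on `X^α(s)` in the canonical basis. -/
def XE (p : ℕ) (α : ℂ) (s : ℕ) : Matrix (Fin s) (Fin s) ℂ :=
  Matrix.of fun i j =>
    if (i : ℕ) + 1 = (j : ℕ) then α * qi p (j : ℕ) * qi p ((s : ℤ) - (j : ℕ)) else 0

/-- Matrix of `F` on `X^α(s)` in the canonical basis. -/
def XF (s : ℕ) : Matrix (Fin s) (Fin s) ℂ :=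
  Matrix.of fun i j => if (i : ℕ) = (j : ℕ) + 1 then (1 : ℂ) else 0

/-- The statement that `ρX α s` is the representation on `X^α(s)` for the relevant
values of `α` and `s`. -/
def IsXRep (p : ℕ) (ρX : (α : ℂ) → (s : ℕ) → (Uq p →ₐ[ℂ] Matrix (Fin s) (Fin s) ℂ)) : Prop :=
  ∀ α : ℂ, (α = 1 ∨ α = -1) → ∀ s : ℕ, 1 ≤ s → s ≤ p →
    ρX α s (KK p) = XK p α s ∧ ρX α s (EE p) = XE p α s ∧ ρX α s (FF p) = XF s

/-! ### The projective modules `P^α(s)` as matrix representations -/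

/-- Index for the standard basis `(b_i, x_j, y_k, a_l)` of `P^α(s)`. -/
abbrev PIdx (p s : ℕ) := Fin s ⊕ (Fin (p - s) ⊕ (Fin (p - s) ⊕ Fin s))

/-- Diagonal of the matrix of `K` on `P^α(s)`. -/
def PKdiag (p : ℕ) (α : ℂ) (s : ℕ) : PIdx p s → ℂ
  | .inl i => α * q p ^ ((s : ℤ) - 1 - 2 * (i : ℕ))
  | .inr (.inl j) => -α * q p ^ ((p : ℤ) - s - 1 - 2 * (j : ℕ))
  | .inr (.inr (.inl k)) => -α * q p ^ ((p : ℤ) - s - 1 - 2 * (k : ℕ))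
  | .inr (.inr (.inr l)) => α * q p ^ ((s : ℤ) - 1 - 2 * (l : ℕ))

/-- Matrix of `K` on `P^α(s)` in the standard basis. -/
def PK (p : ℕ) (α : ℂ) (s : ℕ) : Matrix (PIdx p s) (PIdx p s) ℂ :=
  Matrix.diagonal (PKdiag p α s)

/-- Matrix of `E` on `P^α(s)` in the standard basis. -/
def PE (p : ℕ) (α : ℂ) (s : ℕ) : Matrix (PIdx p s) (PIdx p s) ℂ :=
  Matrix.of fun i j =>
    match i, j with
    | .inl i, .inl j =>
        if (i : ℕ) + 1 = (j : ℕ) then α * qi p (j : ℕ) * qi p ((s : ℤ) - (j : ℕ)) else 0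
    | .inr (.inl jx), .inl j => if (j : ℕ) = 0 ∧ (jx : ℕ) + 1 = p - s then 1 else 0
    | .inr (.inr (.inr l)), .inl j => if (l : ℕ) + 1 = (j : ℕ) then 1 else 0
    | .inr (.inl i), .inr (.inl j) =>
        if (i : ℕ) + 1 = (j : ℕ) then -α * qi p (j : ℕ) * qi p ((p : ℤ) - s - (j : ℕ)) else 0
    | .inr (.inr (.inl i)), .inr (.inr (.inl k)) =>
        if (i : ℕ) + 1 = (k : ℕ) then -α * qi p (k : ℕ) * qi p ((p : ℤ) - s - (k : ℕ)) else 0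
    | .inr (.inr (.inr l)), .inr (.inr (.inl k)) =>
        if (k : ℕ) = 0 ∧ (l : ℕ) + 1 = s then 1 else 0
    | .inr (.inr (.inr i)), .inr (.inr (.inr l)) =>
        if (i : ℕ) + 1 = (l : ℕ) then α * qi p (l : ℕ) * qi p ((s : ℤ) - (l : ℕ)) else 0
    | _, _ => 0

/-- Matrix of `F` on `P^α(s)` in the standard basis. -/
def PF (p s : ℕ) : Matrix (PIdx p s) (PIdx p s) ℂ :=
  Matrix.of fun i j =>
    match i, j with
    | .inl i, .inl j => if (i : ℕ) = (j : ℕ) + 1 then (1 : ℂ) else 0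
    | .inr (.inr (.inl k)), .inl j => if (j : ℕ) + 1 = s ∧ (k : ℕ) = 0 then 1 else 0
    | .inr (.inl i), .inr (.inl j) => if (i : ℕ) = (j : ℕ) + 1 then 1 else 0
    | .inr (.inr (.inr l)), .inr (.inl j) => if (j : ℕ) + 1 = p - s ∧ (l : ℕ) = 0 then 1 else 0
    | .inr (.inr (.inl i)), .inr (.inr (.inl k)) => if (i : ℕ) = (k : ℕ) + 1 then 1 else 0
    | .inr (.inr (.inr i)), .inr (.inr (.inr l)) => if (i : ℕ) = (l : ℕ) + 1 then 1 else 0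
    | _, _ => 0

/-- The statement that `ρP α s` is the representation on `P^α(s)` for the relevant
values of `α` and `s`. -/
def IsPRep (p : ℕ)
    (ρP : (α : ℂ) → (s : ℕ) → (Uq p →ₐ[ℂ] Matrix (PIdx p s) (PIdx p s) ℂ)) : Prop :=
  ∀ α : ℂ, (α = 1 ∨ α = -1) → ∀ s : ℕ, 1 ≤ s → s ≤ p - 1 →
    ρP α s (KK p) = PK p α s ∧ ρP α s (EE p) = PE p α s ∧ ρP α s (FF p) = PF p s

/-! ### Symmetric linear forms, characters, and the forms `G_s` -/

/-- Symmetric linear forms. -/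
def IsSLF (p : ℕ) (φ : Uq p →ₗ[ℂ] ℂ) : Prop := ∀ x y : Uq p, φ (x * y) = φ (y * x)

/-- The character of a matrix representation. -/
def chiOf (p : ℕ) {n : Type} [Fintype n] [DecidableEq n]
    (ρ : Uq p →ₐ[ℂ] Matrix n n ℂ) : Uq p →ₗ[ℂ] ℂ :=
  (Matrix.traceLinearMap n ℂ ℂ).comp ρ.toLinearMap

/-- The matrix entry functional. -/
def entry {n : Type} (i j : n) : Matrix n n ℂ →ₗ[ℂ] ℂ where
  toFun M := M i j
  map_add' _ _ := rfl
  map_smul' _ _ := rfl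

/-- The symmetric linear form `G_s = tr H^+_s + tr H^-_{p-s}`. -/
def GOf (p : ℕ)
    (ρP : (α : ℂ) → (s : ℕ) → (Uq p →ₐ[ℂ] Matrix (PIdx p s) (PIdx p s) ℂ))
    (s : ℕ) : Uq p →ₗ[ℂ] ℂ :=
  (∑ i : Fin s,
    (entry (Sum.inr (Sum.inr (Sum.inr i))) (Sum.inl i)).comp (ρP 1 s).toLinearMap) +
  (∑ j : Fin (p - s),
    (entry (Sum.inr (Sum.inr (Sum.inr j))) (Sum.inl j)).comp (ρP (-1) (p - s)).toLinearMap)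

/-! ### Convolution product -/

/-- The convolution product of two linear forms, with respect to a comultiplication `Δ`. -/
def conv (p : ℕ) (Δ : Uq p →ₐ[ℂ] (Uq p ⊗[ℂ] Uq p)) (φ ψ : Uq p →ₗ[ℂ] ℂ) :
    Uq p →ₗ[ℂ] ℂ :=
  (LinearMap.mul' ℂ ℂ).comp ((TensorProduct.map φ ψ).comp Δ.toLinearMap)

/-- The statement that `Δ` is the comultiplication of `Ū_q(sl₂)`. -/
def IsCoprod (p : ℕ) (Δ : Uq p →ₐ[ℂ] (Uq p ⊗[ℂ] Uq p)) : Prop :=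
  Δ (EE p) = 1 ⊗ₜ[ℂ] EE p + EE p ⊗ₜ[ℂ] KK p ∧
  Δ (FF p) = FF p ⊗ₜ[ℂ] 1 + KKinv p ⊗ₜ[ℂ] FF p ∧
  Δ (KK p) = KK p ⊗ₜ[ℂ] KK p ∧
  Δ (KKinv p) = KKinv p ⊗ₜ[ℂ] KKinv p


/-!
Call a linear form torus-null if it is symmetric with respect to `F` and `K` and vanishes on all
powers of `K`. By `K`-symmetry such a form `φ` only sees the PBW monomials `F ^ n E ^ n K ^ j`, and
comparing `φ (F x)` with `φ (x F)` for `x = F ^ n E ^ (n + 1) K ^ j` gives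
`(q ^ (2 j) - 1) φ (F ^ (n + 1) E ^ (n + 1) K ^ j)
  = c (q ^ n φ (F ^ n E ^ n K ^ (j + 1)) - q ^ (-n) φ (F ^ n E ^ n K ^ (j - 1)))`.
The recursion starts at zero, so `φ` is determined by the `φ (F ^ n E ^ n K ^ j)` with `p ∣ j`, and
`φ (F ^ n E ^ n K ^ j) = 0` as long as the interval `(j - n, j + n)` contains no multiple of `p`.

A convolution product `φ ψ` of torus-null forms is torus-null. By the `q`-binomial formula its value
at `F ^ n E ^ n K ^ j` with `p ∣ j` is a combination of products
`φ (F ^ k E ^ k K ^ (j - l)) ψ (F ^ l E ^ l K ^ (j + k))` with `k + l = n < p`, in which the factor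
with the smaller exponent vanishes by the criterion above. Hence `φ ψ = 0`.

Finally `G_s` is torus-null: powers of `K` act diagonally, and the two traces fail to be symmetric
with respect to `F` by matrix entries that cancel because of the homomorphisms between `P^+(s)` and
`P^-(p - s)` sending the top of one into the middle of the other.
-/

section General

variable {R A B M : Type*} [CommSemiring R] [Semiring A] [Algebra R A] [Semiring B] [Algebra R B]
  [AddCommMonoid M] [Module R M]

/-- The subalgebra of all `y` with respect to which a linear map `φ` is symmetric, i.e.
`φ (x * y) = φ (y * x)` for every `x`. It is the whole algebra exactly when `φ` is symmetric. -/
def symmSubalgebra (φ : A →ₗ[R] M) : Subalgebra R A where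
  carrier := {y | ∀ x, φ (x * y) = φ (y * x)}
  mul_mem' {y z} hy hz x := by rw [← mul_assoc, hz, ← mul_assoc, hy, mul_assoc]
  add_mem' {y z} hy hz x := by rw [mul_add, add_mul, map_add, map_add, hy, hz]
  algebraMap_mem' r x := by rw [Algebra.commutes]

lemma mem_symmSubalgebra_comp {f : A →ₐ[R] B} {φ : B →ₗ[R] M} {y : A}
    (hy : f y ∈ symmSubalgebra φ) : y ∈ symmSubalgebra (φ ∘ₗ f.toLinearMap) := fun x ↦ by
  simpa only [LinearMap.comp_apply, AlgHom.toLinearMap_apply, map_mul] using hy (f x)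

lemma tmul_mem_symmSubalgebra {φ : A →ₗ[R] R} {ψ : B →ₗ[R] R} {a : A} {b : B}
    (ha : a ∈ symmSubalgebra φ) (hb : b ∈ symmSubalgebra ψ) :
    a ⊗ₜ[R] b ∈ symmSubalgebra (LinearMap.mul' R R ∘ₗ TensorProduct.map φ ψ) := fun x ↦ by
  induction x using TensorProduct.induction_on with
  | zero => simp only [zero_mul, mul_zero]
  | tmul c d =>
    simp only [Algebra.TensorProduct.tmul_mul_tmul, LinearMap.comp_apply, TensorProduct.map_tmul,
      LinearMap.mul'_apply, ha c, hb d]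
  | add x y hx hy => rw [add_mul, mul_add, map_add, map_add, hx, hy]

lemma span_eq_top_of_mul_mem {s X : Set A} (hs : Algebra.adjoin R s = ⊤)
    (one_mem : 1 ∈ Submodule.span R X)
    (mul_mem : ∀ x ∈ X, ∀ g ∈ s, x * g ∈ Submodule.span R X) : Submodule.span R X = ⊤ := by
  have span_mul_mem (g : A) (hg : g ∈ s) : ∀ x ∈ Submodule.span R X, x * g ∈ Submodule.span R X :=
    (Submodule.span_le (p := (Submodule.span R X).comap (LinearMap.mulRight R g))).2
      fun x hx ↦ mul_mem x hx g hg
  rw [eq_top_iff, ← Algebra.top_toSubmodule, ← hs, Algebra.adjoin_eq_span, Submodule.span_le]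
  intro u hu
  induction hu using Submonoid.closure_induction_right with
  | one => exact one_mem
  | mul_right x _ g hg ih => exact span_mul_mem g hg x ih

lemma mul_pow_of_mul_eq_smul {x y : A} {c : R} (h : y * x = c • (x * y)) (n : ℕ) :
    y * x ^ n = c ^ n • (x ^ n * y) := by
  have : SemiconjBy y x (c • x) := h.trans (smul_mul_assoc c x y).symm
  simpa only [SemiconjBy, smul_pow, smul_mul_assoc] using this.pow_right n

lemma add_pow_mem_span_of_mul_eq_smul {x y : A} {c : R} (h : y * x = c • (x * y)) (n : ℕ) :
    (x + y) ^ n ∈ Submodule.span R {z | ∃ k l, k + l = n ∧ x ^ k * y ^ l = z} := by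
  induction n with
  | zero => exact Submodule.subset_span ⟨0, 0, rfl, by simp⟩
  | succ n ih =>
    rw [pow_succ']
    have span_le_comap : Submodule.span R {z | ∃ k l, k + l = n ∧ x ^ k * y ^ l = z} ≤
        (Submodule.span R {z | ∃ k l, k + l = n + 1 ∧ x ^ k * y ^ l = z}).comap
          (LinearMap.mulLeft R (x + y)) := by
      rw [Submodule.span_le]
      rintro _ ⟨k, l, rfl, rfl⟩
      have expand : (x + y) * (x ^ k * y ^ l) =
          x ^ (k + 1) * y ^ l + c ^ k • (x ^ k * y ^ (l + 1)) := by
        rw [add_mul, ← mul_assoc, ← mul_assoc, mul_pow_of_mul_eq_smul h, smul_mul_assoc,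
          mul_assoc _ y, ← pow_succ', ← pow_succ']
      rw [SetLike.mem_coe, Submodule.mem_comap, LinearMap.mulLeft_apply, expand]
      exact add_mem (Submodule.subset_span ⟨k + 1, l, by omega, rfl⟩)
        (Submodule.smul_mem _ _ (Submodule.subset_span ⟨k, l + 1, by omega, rfl⟩))
    exact span_le_comap ih

lemma units_zpow_mul_of_mul_eq_smul {𝕜 : Type*} [Semifield 𝕜] [Algebra 𝕜 A] {u : Aˣ} {x : A}
    {c : 𝕜} (hc : c ≠ 0) (h : u * x = c • (x * u)) (j : ℤ) :
    (u ^ j : Aˣ) * x = c ^ j • (x * (u ^ j : Aˣ)) := by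
  have hinv : (u⁻¹ : Aˣ) * x = c⁻¹ • (x * (u⁻¹ : Aˣ)) := by
    rw [Units.inv_mul_eq_iff_eq_mul, mul_smul_comm, ← mul_assoc, h, smul_mul_assoc, smul_smul,
      inv_mul_cancel₀ hc, one_smul, Units.mul_inv_cancel_right]
  induction j with
  | zero => simp
  | succ i ih =>
    rw [zpow_add_one, Units.val_mul, mul_assoc, h, mul_smul_comm, ← mul_assoc, ih, smul_mul_assoc,
      smul_smul, zpow_add_one₀ hc, mul_assoc, mul_comm c]
  | pred i ih =>
    rw [zpow_sub_one, Units.val_mul, mul_assoc, hinv, mul_smul_comm, ← mul_assoc, ih,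
      smul_mul_assoc, smul_smul, zpow_sub_one₀ hc, mul_assoc, mul_comm c⁻¹]

section Matrix

variable {S l m n : Type*} [NonAssocSemiring S] [Fintype n] [DecidableEq n]

lemma mul_apply_of_col_eq_single {T : Matrix n m S} {j : m} {k : n}
    (h : ∀ i, T i j = if i = k then 1 else 0) (U : Matrix l n S) (z : l) :
    (U * T) z j = U z k := by
  simp [Matrix.mul_apply, h]

lemma mul_apply_of_row_eq_single {T : Matrix m n S} {i : m} {k : n}
    (h : ∀ j, T i j = if j = k then 1 else 0) (U : Matrix n l S) (z : l) :
    (T * U) i z = U k z := by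
  simp [Matrix.mul_apply, h]

lemma mul_eq_mul_of_adjoin_eq_top [Fintype m] [DecidableEq m] {s : Set A}
    (hs : Algebra.adjoin R s = ⊤) {ρ : A →ₐ[R] Matrix m m R} {σ : A →ₐ[R] Matrix n n R}
    {T : Matrix m n R} (h : ∀ g ∈ s, ρ g * T = T * σ g) (u : A) : ρ u * T = T * σ u := by
  have hu : u ∈ Algebra.adjoin R s := hs ▸ Algebra.mem_top
  induction hu using Algebra.adjoin_induction with
  | mem g hg => exact h g hg
  | algebraMap r => simp [Algebra.algebraMap_eq_smul_one]
  | add x y _ _ hx hy => rw [map_add, map_add, Matrix.add_mul, Matrix.mul_add, hx, hy]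
  | mul x y _ _ hx hy =>
    rw [map_mul, map_mul, Matrix.mul_assoc, hy, ← Matrix.mul_assoc, hx, Matrix.mul_assoc]

end Matrix

end General

section Relations

variable {p : ℕ}

lemma q_ne_zero (p : ℕ) : q p ≠ 0 := Complex.exp_ne_zero _

lemma q_isPrimitiveRoot (hp : 0 < p) : IsPrimitiveRoot (q p) (2 * p) := by
  have q_eq : q p = Complex.exp (2 * Real.pi * Complex.I / ((2 * p : ℕ) : ℂ)) := by
    rw [q, Nat.cast_mul, Nat.cast_ofNat, mul_assoc, mul_div_mul_left _ _ two_ne_zero]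
  exact q_eq ▸ Complex.isPrimitiveRoot_exp (2 * p) (by omega)

lemma q_zpow_two_mul_eq_one_iff (hp : 0 < p) {j : ℤ} : q p ^ (2 * j) = 1 ↔ (p : ℤ) ∣ j := by
  rw [(q_isPrimitiveRoot hp).zpow_eq_one_iff_dvd, Nat.cast_mul, Nat.cast_ofNat,
    mul_dvd_mul_iff_left two_ne_zero]

lemma q_sub_inv_ne_zero (hp : 2 ≤ p) : q p - (q p)⁻¹ ≠ 0 := fun h ↦ by
  have q_sq : q p ^ (2 * 1 : ℤ) = 1 := by
    rw [mul_one, zpow_two, mul_eq_one_iff_eq_inv₀ (q_ne_zero p)]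
    exact sub_eq_zero.1 h
  have := Int.le_of_dvd one_pos ((q_zpow_two_mul_eq_one_iff (by omega)).1 q_sq)
  omega

lemma KK_mul_KKinv (p : ℕ) : KK p * KKinv p = 1 := by
  simpa [KK, KKinv] using RingQuot.mkAlgHom_rel ℂ (rel.KKinv (p := p))

lemma KKinv_mul_KK (p : ℕ) : KKinv p * KK p = 1 := by
  simpa [KK, KKinv] using RingQuot.mkAlgHom_rel ℂ (rel.KinvK (p := p))

lemma EE_pow_eq_zero (p : ℕ) : EE p ^ p = 0 := by
  simpa [EE] using RingQuot.mkAlgHom_rel ℂ (rel.Ep (p := p))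

lemma FF_pow_eq_zero (p : ℕ) : FF p ^ p = 0 := by
  simpa [FF] using RingQuot.mkAlgHom_rel ℂ (rel.Fp (p := p))

lemma KK_pow_eq_one (p : ℕ) : KK p ^ (2 * p) = 1 := by
  simpa [KK] using RingQuot.mkAlgHom_rel ℂ (rel.K2p (p := p))

lemma KK_mul_EE (p : ℕ) : KK p * EE p = q p ^ 2 • (EE p * KK p) := by
  simpa [KK, EE] using RingQuot.mkAlgHom_rel ℂ (rel.KE (p := p))

lemma KK_mul_FF (p : ℕ) : KK p * FF p = (q p ^ 2)⁻¹ • (FF p * KK p) := by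
  simpa [KK, FF] using RingQuot.mkAlgHom_rel ℂ (rel.KF (p := p))

lemma EE_mul_FF (p : ℕ) :
    EE p * FF p = FF p * EE p + (q p - (q p)⁻¹)⁻¹ • (KK p - KKinv p) := by
  rw [← sub_eq_iff_eq_add']
  simpa [KK, KKinv, EE, FF] using RingQuot.mkAlgHom_rel ℂ (rel.EF (p := p))

/-- The generator `K` as a unit. -/
def KKunit (p : ℕ) : (Uq p)ˣ := ⟨KK p, KKinv p, KK_mul_KKinv p, KKinv_mul_KK p⟩

/-- The integer power `K ^ j`. -/
def Kz (p : ℕ) (j : ℤ) : Uq p := ↑(KKunit p ^ j)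

lemma Kz_zero (p : ℕ) : Kz p 0 = 1 := by simp [Kz]

lemma Kz_one (p : ℕ) : Kz p 1 = KK p := by simp [Kz, KKunit]

lemma Kz_neg_one (p : ℕ) : Kz p (-1) = KKinv p := by simp [Kz, KKunit]

lemma Kz_add (p : ℕ) (i j : ℤ) : Kz p (i + j) = Kz p i * Kz p j := by simp [Kz, zpow_add]

lemma Kz_pow (p : ℕ) (j : ℤ) (n : ℕ) : Kz p j ^ n = Kz p (j * n) := by
  simp [Kz, zpow_mul]

lemma exists_KK_pow_eq_Kz (hp : 0 < p) (j : ℤ) : ∃ n : ℕ, KK p ^ n = Kz p j := by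
  have finite_order : IsOfFinOrder (KKunit p) :=
    isOfFinOrder_iff_pow_eq_one.2 ⟨2 * p, by omega, Units.ext (KK_pow_eq_one p)⟩
  obtain ⟨n, hn⟩ := finite_order.mem_powers_iff_mem_zpowers.2 ⟨j, rfl⟩
  exact ⟨n, congrArg Units.val hn⟩

lemma Kz_mem_of_KK_mem (hp : 0 < p) {S : Subalgebra ℂ (Uq p)} (hK : KK p ∈ S) (j : ℤ) :
    Kz p j ∈ S := by
  obtain ⟨n, hn⟩ := exists_KK_pow_eq_Kz hp j
  exact hn ▸ pow_mem hK n

lemma adjoin_EE_FF_KK (hp : 0 < p) : Algebra.adjoin ℂ {EE p, FF p, KK p} = ⊤ := by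
  rw [eq_top_iff, ← (AlgHom.range_eq_top _).2 (RingQuot.mkAlgHom_surjective ℂ (rel p)),
    ← Algebra.map_top, ← FreeAlgebra.adjoin_range_ι, AlgHom.map_adjoin, Algebra.adjoin_le_iff]
  rintro _ ⟨_, ⟨g, rfl⟩, rfl⟩
  have KK_mem : KK p ∈ Algebra.adjoin ℂ {EE p, FF p, KK p} := Algebra.subset_adjoin (by simp)
  cases g with
  | E => exact Algebra.subset_adjoin (by simp [EE])
  | F => exact Algebra.subset_adjoin (by simp [FF])
  | K => exact KK_mem
  | Kinv =>
    have Kz_mem := Kz_mem_of_KK_mem hp KK_mem (-1)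
    rwa [Kz_neg_one] at Kz_mem

/-- `x` has weight `n` (as a multiple of the simple root `α`, so that `E` has weight `1` and `F`
has weight `-1`) for the adjoint action of `K`, i.e. `K x K⁻¹ = q ^ (2 n) x`. -/
def HasWeight (x : Uq p) (n : ℤ) : Prop := KK p * x = q p ^ (2 * n) • (x * KK p)

lemma hasWeight_EE : HasWeight (EE p) 1 := KK_mul_EE p

lemma hasWeight_FF : HasWeight (FF p) (-1) :=
  (KK_mul_FF p).trans (by rw [mul_neg_one, zpow_neg]; rfl)

lemma hasWeight_Kz (j : ℤ) : HasWeight (Kz p j) 0 := by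
  rw [HasWeight, mul_zero, zpow_zero, one_smul, ← Kz_one, ← Kz_add, ← Kz_add, add_comm]

lemma HasWeight.mul {x y : Uq p} {m n : ℤ} (hx : HasWeight x m) (hy : HasWeight y n) :
    HasWeight (x * y) (m + n) := by
  rw [HasWeight] at *
  rw [← mul_assoc, hx, smul_mul_assoc, mul_assoc, hy, mul_smul_comm, smul_smul, mul_assoc, mul_add,
    zpow_add₀ (q_ne_zero p)]

lemma HasWeight.pow {x : Uq p} {n : ℤ} (hx : HasWeight x n) (k : ℕ) :
    HasWeight (x ^ k) (k * n) := by
  induction k with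
  | zero => simpa [Kz_zero] using hasWeight_Kz (p := p) 0
  | succ k ih => simpa only [pow_succ, Nat.cast_succ, add_one_mul] using ih.mul hx

lemma HasWeight.Kz_mul {x : Uq p} {n : ℤ} (hx : HasWeight x n) (j : ℤ) :
    Kz p j * x = q p ^ (2 * n * j) • (x * Kz p j) := by
  rw [zpow_mul]
  exact units_zpow_mul_of_mul_eq_smul (zpow_ne_zero _ (q_ne_zero p)) (u := KKunit p) hx j

lemma HasWeight.apply_eq_zero {φ : Uq p →ₗ[ℂ] ℂ} (hK : KK p ∈ symmSubalgebra φ) (hp : 0 < p)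
    {x : Uq p} {n : ℤ} (hx : HasWeight x n) (hn : ¬ (p : ℤ) ∣ n) : φ x = 0 := by
  have twist : φ x = q p ^ (2 * n) * φ x := calc
    φ x = φ (x * KKinv p * KK p) := by rw [mul_assoc, KKinv_mul_KK, mul_one]
    _ = φ (KK p * x * KKinv p) := by rw [hK, mul_assoc]
    _ = q p ^ (2 * n) * φ x := by
      rw [hx, smul_mul_assoc, mul_assoc, KK_mul_KKinv, mul_one, map_smul, smul_eq_mul]
  by_contra hφ
  exact hn ((q_zpow_two_mul_eq_one_iff hp).1 ((right_eq_mul₀ hφ).1 twist))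

end Relations

section PBW

variable {p : ℕ}

lemma qi_mul_sub_inv (hp : 2 ≤ p) (n : ℤ) :
    qi p n * (q p - (q p)⁻¹) = q p ^ n - q p ^ (-n) :=
  div_mul_cancel₀ _ (q_sub_inv_ne_zero hp)

lemma qi_one (hp : 2 ≤ p) : qi p 1 = 1 := by
  rw [qi, zpow_one, zpow_neg_one, div_self (q_sub_inv_ne_zero hp)]

lemma q_zpow_two_mul_add_qi_mul (hp : 2 ≤ p) (n : ℤ) :
    q p ^ (2 * n) + qi p n * q p ^ (n - 1) = qi p (n + 1) * q p ^ n := by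
  have hq := q_ne_zero p
  refine mul_right_cancel₀ (q_sub_inv_ne_zero hp) ?_
  rw [add_mul, mul_right_comm, qi_mul_sub_inv hp, mul_right_comm, qi_mul_sub_inv hp, two_mul,
    zpow_add₀ hq, zpow_sub_one₀ hq, zpow_neg, zpow_neg, zpow_add_one₀ hq]
  field_simp
  ring

lemma q_zpow_neg_two_mul_add_qi_mul (hp : 2 ≤ p) (n : ℤ) :
    q p ^ (-(2 * n)) + qi p n * q p ^ (-(n - 1)) = qi p (n + 1) * q p ^ (-n) := by
  have hq := q_ne_zero p
  refine mul_right_cancel₀ (q_sub_inv_ne_zero hp) ?_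
  rw [add_mul, mul_right_comm, qi_mul_sub_inv hp, mul_right_comm, qi_mul_sub_inv hp, two_mul,
    zpow_neg, zpow_neg _ (n - 1), zpow_add₀ hq, zpow_sub_one₀ hq, zpow_neg, zpow_neg,
    zpow_add_one₀ hq]
  field_simp
  ring

lemma EE_pow_succ_mul_FF (hp : 2 ≤ p) (n : ℕ) :
    EE p ^ (n + 1) * FF p = FF p * EE p ^ (n + 1) + (qi p (n + 1) * (q p - (q p)⁻¹)⁻¹) •
      (EE p ^ n * (q p ^ (n : ℤ) • KK p - q p ^ (-n : ℤ) • KKinv p)) := by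
  induction n with
  | zero => simp [EE_mul_FF, qi_one hp]
  | succ n ih =>
    have hE := hasWeight_EE (p := p).pow (n + 1)
    have hK : KK p * EE p ^ (n + 1) = q p ^ (2 * (n + 1 : ℤ)) • (EE p ^ (n + 1) * KK p) := by
      simpa [HasWeight] using hE
    have hKinv :
        KKinv p * EE p ^ (n + 1) = q p ^ (-(2 * (n + 1 : ℤ))) • (EE p ^ (n + 1) * KKinv p) := by
      simpa [Kz_neg_one] using hE.Kz_mul (-1)
    have hcoeff := q_zpow_two_mul_add_qi_mul hp (n + 1)
    have hcoeff' := q_zpow_neg_two_mul_add_qi_mul hp (n + 1)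
    rw [add_sub_cancel_right] at hcoeff hcoeff'
    rw [pow_succ', mul_assoc, ih, mul_add, ← mul_assoc, EE_mul_FF, add_mul, smul_mul_assoc, sub_mul,
      hK, hKinv, mul_smul_comm, ← mul_assoc, ← pow_succ', mul_assoc, ← pow_succ', Nat.cast_succ,
      mul_sub, mul_sub, mul_smul_comm, mul_smul_comm, mul_smul_comm, mul_smul_comm, add_assoc]
    congr 1
    linear_combination (norm := module)
      hcoeff • ((q p - (q p)⁻¹)⁻¹ • (EE p ^ (n + 1) * KK p)) -
      hcoeff' • ((q p - (q p)⁻¹)⁻¹ • (EE p ^ (n + 1) * KKinv p))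

/-- The Poincaré–Birkhoff–Witt monomial `F ^ m * E ^ n * K ^ j`. -/
def pbw (p m n : ℕ) (j : ℤ) : Uq p := FF p ^ m * EE p ^ n * Kz p j

lemma pbw_zero_zero (j : ℤ) : pbw p 0 0 j = Kz p j := by simp [pbw]

lemma pbw_eq_zero_of_le_left {m : ℕ} (h : p ≤ m) (n : ℕ) (j : ℤ) : pbw p m n j = 0 := by
  rw [pbw, pow_eq_zero_of_le h (FF_pow_eq_zero p), zero_mul, zero_mul]

lemma pbw_eq_zero_of_le_right (m : ℕ) {n : ℕ} (h : p ≤ n) (j : ℤ) : pbw p m n j = 0 := by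
  rw [pbw, pow_eq_zero_of_le h (EE_pow_eq_zero p), mul_zero, zero_mul]

lemma hasWeight_pbw (m n : ℕ) (j : ℤ) : HasWeight (pbw p m n j) (n - m) := by
  have := ((hasWeight_FF (p := p).pow m).mul (hasWeight_EE.pow n)).mul (hasWeight_Kz j)
  rwa [mul_neg_one, mul_one, add_zero, neg_add_eq_sub] at this

lemma FF_mul_pbw (m n : ℕ) (j : ℤ) : FF p * pbw p m n j = pbw p (m + 1) n j := by
  simp only [pbw, pow_succ', mul_assoc]

lemma pbw_mul_Kz (m n : ℕ) (i j : ℤ) : pbw p m n i * Kz p j = pbw p m n (i + j) := by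
  rw [pbw, mul_assoc, ← Kz_add, pbw]

lemma pbw_mul_EE (m n : ℕ) (j : ℤ) : pbw p m n j * EE p = q p ^ (2 * j) • pbw p m (n + 1) j := by
  rw [pbw, mul_assoc, hasWeight_EE.Kz_mul, mul_one, mul_smul_comm, ← mul_assoc, mul_assoc (_ ^ m),
    ← pow_succ, pbw]

lemma pbw_mul_FF_of_zero (m : ℕ) (j : ℤ) :
    pbw p m 0 j * FF p = q p ^ (-(2 * j)) • pbw p (m + 1) 0 j := by
  rw [pbw, pow_zero, mul_one, mul_assoc, hasWeight_FF.Kz_mul, mul_smul_comm, ← mul_assoc,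
    ← pow_succ, pbw, pow_zero, mul_one, mul_neg_one, neg_mul]

lemma pbw_succ_mul_FF (hp : 2 ≤ p) (m n : ℕ) (j : ℤ) :
    pbw p m (n + 1) j * FF p = q p ^ (-(2 * j)) • (pbw p (m + 1) (n + 1) j +
      (qi p (n + 1) * (q p - (q p)⁻¹)⁻¹) •
        (q p ^ (n : ℤ) • pbw p m n (j + 1) - q p ^ (-n : ℤ) • pbw p m n (j - 1))) := by
  rw [pbw, mul_assoc, hasWeight_FF.Kz_mul, mul_smul_comm, ← mul_assoc, mul_assoc (_ ^ m),
    EE_pow_succ_mul_FF hp, add_comm j, sub_eq_add_neg j, add_comm j]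
  simp only [pbw, Kz_add, Kz_one, Kz_neg_one, mul_neg_one, neg_mul, mul_add, add_mul, mul_sub,
    sub_mul, mul_smul_comm, smul_mul_assoc, pow_succ (FF p), mul_assoc]

lemma span_pbw (hp : 2 ≤ p) :
    Submodule.span ℂ {x | ∃ m n j, pbw p m n j = x} = ⊤ := by
  have pbw_mem (m n : ℕ) (j : ℤ) : pbw p m n j ∈ Submodule.span ℂ {x | ∃ m n j, pbw p m n j = x} :=
    Submodule.subset_span ⟨m, n, j, rfl⟩
  refine span_eq_top_of_mul_mem (adjoin_EE_FF_KK (p := p) (by omega)) ?_ ?_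
  · simpa [pbw, Kz_zero] using pbw_mem 0 0 0
  · rintro _ ⟨m, n, j, rfl⟩ _ (rfl | rfl | rfl)
    · exact pbw_mul_EE (p := p) m n j ▸ Submodule.smul_mem _ _ (pbw_mem _ _ _)
    · cases n with
      | zero => exact pbw_mul_FF_of_zero (p := p) m j ▸ Submodule.smul_mem _ _ (pbw_mem _ _ _)
      | succ n =>
        rw [pbw_succ_mul_FF hp]
        exact Submodule.smul_mem _ _ <| add_mem (pbw_mem _ _ _) <| Submodule.smul_mem _ _ <|
          sub_mem (Submodule.smul_mem _ _ (pbw_mem _ _ _))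
            (Submodule.smul_mem _ _ (pbw_mem _ _ _))
    · exact Kz_one p ▸ pbw_mul_Kz (p := p) m n j 1 ▸ pbw_mem _ _ _

end PBW

section Vanishing

variable {p : ℕ} {φ : Uq p →ₗ[ℂ] ℂ}

/-- A linear form on `Ū_q(sl₂)` that is symmetric with respect to `F` and `K` and vanishes on the
torus, i.e. on all powers of `K`. -/
structure IsTorusNull (φ : Uq p →ₗ[ℂ] ℂ) : Prop where
  FF_mem : FF p ∈ symmSubalgebra φ
  KK_mem : KK p ∈ symmSubalgebra φ
  apply_Kz (j : ℤ) : φ (Kz p j) = 0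

namespace IsTorusNull

lemma apply_pbw_succ (hφ : IsTorusNull φ) (hp : 2 ≤ p) (n : ℕ) (j : ℤ) :
    (q p ^ (2 * j) - 1) * φ (pbw p (n + 1) (n + 1) j) =
      qi p (n + 1) * (q p - (q p)⁻¹)⁻¹ *
        (q p ^ (n : ℤ) * φ (pbw p n n (j + 1)) - q p ^ (-n : ℤ) * φ (pbw p n n (j - 1))) := by
  have symm_FF := hφ.FF_mem (pbw p n (n + 1) j)
  rw [FF_mul_pbw, pbw_succ_mul_FF hp, zpow_neg] at symm_FF
  simp only [map_smul, map_add, map_sub, smul_eq_mul] at symm_FF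
  rw [inv_mul_eq_iff_eq_mul₀ (zpow_ne_zero _ (q_ne_zero p))] at symm_FF
  linear_combination -symm_FF

lemma apply_pbw_succ_eq_zero (hφ : IsTorusNull φ) (hp : 2 ≤ p) {n : ℕ} {j : ℤ}
    (hj : ¬ (p : ℤ) ∣ j) (h_add : φ (pbw p n n (j + 1)) = 0) (h_sub : φ (pbw p n n (j - 1)) = 0) :
    φ (pbw p (n + 1) (n + 1) j) = 0 := by
  have recursion := hφ.apply_pbw_succ hp n j
  rw [h_add, h_sub, mul_zero, mul_zero, sub_zero, mul_zero, mul_eq_zero, sub_eq_zero,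
    q_zpow_two_mul_eq_one_iff (by omega)] at recursion
  exact recursion.resolve_left hj

lemma apply_pbw_self_eq_zero_of_forall_not_dvd (hφ : IsTorusNull φ) (hp : 2 ≤ p) {n : ℕ} {j : ℤ}
    (hj : ∀ d : ℤ, |d| < n → ¬ (p : ℤ) ∣ j + d) : φ (pbw p n n j) = 0 := by
  induction n generalizing j with
  | zero => rw [pbw_zero_zero, hφ.apply_Kz]
  | succ n ih =>
    refine hφ.apply_pbw_succ_eq_zero hp ?_ (ih fun d hd ↦ ?_) (ih fun d hd ↦ ?_)
    · simpa using hj 0 (by simp)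
    · rw [add_assoc]
      exact hj _ (by rw [abs_lt] at *; omega)
    · rw [sub_add_eq_add_sub, add_sub_assoc]
      exact hj _ (by rw [abs_lt] at *; omega)

lemma apply_pbw_eq_zero_of_ne (hφ : IsTorusNull φ) (hp : 0 < p) {m n : ℕ} (hmn : m ≠ n)
    (hm : m < p) (hn : n < p) (j : ℤ) : φ (pbw p m n j) = 0 := by
  refine (hasWeight_pbw m n j).apply_eq_zero hφ.KK_mem hp fun hdvd ↦ hmn ?_
  have := Int.eq_zero_of_abs_lt_dvd hdvd (by rw [abs_lt]; omega)
  omega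

lemma eq_zero_of_apply_pbw_self (hφ : IsTorusNull φ) (hp : 2 ≤ p)
    (h : ∀ n < p, ∀ j : ℤ, (p : ℤ) ∣ j → φ (pbw p n n j) = 0) : φ = 0 := by
  have apply_pbw_self (n : ℕ) (hn : n < p) (j : ℤ) : φ (pbw p n n j) = 0 := by
    induction n generalizing j with
    | zero => rw [pbw_zero_zero, hφ.apply_Kz]
    | succ n ih =>
      by_cases hj : (p : ℤ) ∣ j
      · exact h _ hn j hj
      · exact hφ.apply_pbw_succ_eq_zero hp hj (ih (by omega) _) (ih (by omega) _)
  refine LinearMap.ext_on (span_pbw hp) ?_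
  rintro _ ⟨m, n, j, rfl⟩
  rcases le_or_gt p m with hm | hm
  · rw [pbw_eq_zero_of_le_left hm, map_zero, map_zero]
  rcases le_or_gt p n with hn | hn
  · rw [pbw_eq_zero_of_le_right m hn, map_zero, map_zero]
  rcases eq_or_ne m n with rfl | hmn
  · exact apply_pbw_self m hm j
  · exact hφ.apply_pbw_eq_zero_of_ne (by omega) hmn hm hn j

end IsTorusNull

end Vanishing

section Comultiplication

variable {p : ℕ} {Δ : Uq p →ₐ[ℂ] Uq p ⊗[ℂ] Uq p} {φ ψ : Uq p →ₗ[ℂ] ℂ}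

lemma comul_Kz (hΔ : IsCoprod p Δ) (hp : 0 < p) (j : ℤ) : Δ (Kz p j) = Kz p j ⊗ₜ Kz p j := by
  obtain ⟨n, hn⟩ := exists_KK_pow_eq_Kz hp j
  rw [← hn, map_pow, hΔ.2.2.1, Algebra.TensorProduct.tmul_pow]

lemma comul_FF_pow_mem_span (hΔ : IsCoprod p Δ) (n : ℕ) :
    Δ (FF p ^ n) ∈ Submodule.span ℂ
      {x | ∃ k l : ℕ, k + l = n ∧ (FF p ^ k * Kz p (-l)) ⊗ₜ[ℂ] (FF p ^ l) = x} := by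
  have skew_comm : (KKinv p ⊗ₜ[ℂ] FF p) * (FF p ⊗ₜ[ℂ] 1) =
      q p ^ (2 : ℤ) • ((FF p ⊗ₜ[ℂ] 1) * (KKinv p ⊗ₜ[ℂ] FF p)) := by
    simpa [Kz_neg_one, TensorProduct.smul_tmul'] using
      congrArg (· ⊗ₜ[ℂ] FF p) (hasWeight_FF (p := p).Kz_mul (-1))
  have := add_pow_mem_span_of_mul_eq_smul skew_comm n
  rw [← hΔ.2.1, ← map_pow] at this
  simpa [Algebra.TensorProduct.tmul_pow, ← Kz_neg_one, Kz_pow] using this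

lemma comul_EE_pow_mem_span (hΔ : IsCoprod p Δ) (n : ℕ) :
    Δ (EE p ^ n) ∈ Submodule.span ℂ
      {x | ∃ l k : ℕ, l + k = n ∧ (EE p ^ k) ⊗ₜ[ℂ] (EE p ^ l * Kz p k) = x} := by
  have skew_comm : (EE p ⊗ₜ[ℂ] KK p) * (1 ⊗ₜ[ℂ] EE p) =
      q p ^ 2 • ((1 ⊗ₜ[ℂ] EE p) * (EE p ⊗ₜ[ℂ] KK p)) := by
    simp [KK_mul_EE]
  have := add_pow_mem_span_of_mul_eq_smul skew_comm n
  rw [← hΔ.1, ← map_pow] at this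
  simpa [Algebra.TensorProduct.tmul_pow, ← Kz_one, Kz_pow] using this

lemma comul_pbw_mem_span (hΔ : IsCoprod p Δ) (hp : 0 < p) (m n : ℕ) (j : ℤ) :
    Δ (pbw p m n j) ∈ Submodule.span ℂ
      {x | ∃ k l k' l' : ℕ, k + l = m ∧ k' + l' = n ∧
        pbw p k k' (j - l) ⊗ₜ[ℂ] pbw p l l' (j + k') = x} := by
  have mul_mem := Submodule.mul_mem_mul (comul_FF_pow_mem_span hΔ m) (comul_EE_pow_mem_span hΔ n)
  rw [Submodule.span_mul_span, ← map_mul] at mul_mem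
  rw [pbw, map_mul, comul_Kz hΔ hp]
  refine (Submodule.span_le (p := Submodule.comap (LinearMap.mulRight ℂ (Kz p j ⊗ₜ Kz p j))
    (Submodule.span ℂ _))).2 ?_ mul_mem
  rintro _ ⟨_, ⟨k, l, rfl, rfl⟩, _, ⟨l', k', rfl, rfl⟩, rfl⟩
  have collect : (FF p ^ k * Kz p (-l)) ⊗ₜ[ℂ] (FF p ^ l) *
      (EE p ^ k') ⊗ₜ[ℂ] (EE p ^ l' * Kz p k') * Kz p j ⊗ₜ Kz p j =
      q p ^ (2 * (k' * 1) * (-l) : ℤ) • (pbw p k k' (j - l) ⊗ₜ[ℂ] pbw p l l' (j + k')) := by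
    rw [Algebra.TensorProduct.tmul_mul_tmul, Algebra.TensorProduct.tmul_mul_tmul,
      mul_assoc (FF p ^ k), (hasWeight_EE.pow k').Kz_mul, TensorProduct.smul_tmul', sub_eq_neg_add,
      add_comm j]
    simp only [pbw, Kz_add, mul_assoc, mul_smul_comm, smul_mul_assoc]
  simp only [Submodule.comap_coe, Set.mem_preimage, LinearMap.mulRight_apply, collect,
    SetLike.mem_coe]
  exact Submodule.smul_mem _ _ (Submodule.subset_span ⟨k, l, k', l', rfl, add_comm _ _, rfl⟩)

lemma IsTorusNull.conv_apply_pbw_self (hΔ : IsCoprod p Δ) (hp : 2 ≤ p) (hφ : IsTorusNull φ)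
    (hψ : IsTorusNull ψ) {n : ℕ} (hn : n < p) {j : ℤ} (hj : (p : ℤ) ∣ j) :
    conv p Δ φ ψ (pbw p n n j) = 0 := by
  refine (Submodule.span_le (p := LinearMap.ker (LinearMap.mul' ℂ ℂ ∘ₗ TensorProduct.map φ ψ))).2 ?_
    (comul_pbw_mem_span hΔ (by omega) n n j)
  rintro _ ⟨k, l, k', l', hkl, hkl', rfl⟩
  suffices φ (pbw p k k' (j - l)) = 0 ∨ ψ (pbw p l l' (j + k')) = 0 by simpa using this
  rcases ne_or_eq k k' with hk | rfl
  · exact .inl (hφ.apply_pbw_eq_zero_of_ne (by omega) hk (by omega) (by omega) _)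
  obtain rfl : l = l' := by omega
  have not_dvd {e : ℤ} (he : e ≠ 0) (he_lt : |e| < p) : ¬ (p : ℤ) ∣ j + e := fun hdvd ↦
    he (Int.eq_zero_of_abs_lt_dvd ((dvd_add_right hj).1 hdvd) he_lt)
  rcases le_total k l with hle | hle
  · refine .inl (hφ.apply_pbw_self_eq_zero_of_forall_not_dvd hp fun d hd ↦ ?_)
    rw [sub_add_eq_add_sub, add_sub_assoc]
    rw [abs_lt] at hd
    exact not_dvd (by omega) (by rw [abs_lt]; omega)
  · refine .inr (hψ.apply_pbw_self_eq_zero_of_forall_not_dvd hp fun d hd ↦ ?_)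
    rw [add_assoc]
    rw [abs_lt] at hd
    exact not_dvd (by omega) (by rw [abs_lt]; omega)

lemma IsTorusNull.conv (hΔ : IsCoprod p Δ) (hp : 0 < p) (hφ : IsTorusNull φ)
    (hψ : IsTorusNull ψ) : IsTorusNull (conv p Δ φ ψ) where
  FF_mem := by
    refine mem_symmSubalgebra_comp (f := Δ) (φ := LinearMap.mul' ℂ ℂ ∘ₗ TensorProduct.map φ ψ) ?_
    have KKinv_mem := Kz_mem_of_KK_mem hp hφ.KK_mem (-1)
    rw [Kz_neg_one] at KKinv_mem
    rw [hΔ.2.1]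
    exact add_mem (tmul_mem_symmSubalgebra hφ.FF_mem (one_mem _))
      (tmul_mem_symmSubalgebra KKinv_mem hψ.FF_mem)
  KK_mem := by
    refine mem_symmSubalgebra_comp (f := Δ) (φ := LinearMap.mul' ℂ ℂ ∘ₗ TensorProduct.map φ ψ) ?_
    rw [hΔ.2.2.1]
    exact tmul_mem_symmSubalgebra hφ.KK_mem hψ.KK_mem
  apply_Kz j := by
    simp [Uqsl2.conv, comul_Kz hΔ hp, hφ.apply_Kz]

theorem IsTorusNull.conv_eq_zero (hΔ : IsCoprod p Δ) (hp : 2 ≤ p) (hφ : IsTorusNull φ)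
    (hψ : IsTorusNull ψ) : Uqsl2.conv p Δ φ ψ = 0 :=
  (hφ.conv hΔ (by omega) hψ).eq_zero_of_apply_pbw_self hp
    fun _ hn _ hj ↦ hφ.conv_apply_pbw_self hΔ hp hψ hn hj

end Comultiplication

section Projective

/-- The index of the basis vector `b_i` of `P^α(s)`. -/
abbrev ib {p s : ℕ} (i : Fin s) : PIdx p s := .inl i

/-- The index of the basis vector `x_j` of `P^α(s)`. -/
abbrev ix {p s : ℕ} (j : Fin (p - s)) : PIdx p s := .inr (.inl j)

/-- The index of the basis vector `y_k` of `P^α(s)`. -/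
abbrev iy {p s : ℕ} (k : Fin (p - s)) : PIdx p s := .inr (.inr (.inl k))

/-- The index of the basis vector `a_l` of `P^α(s)`. -/
abbrev ia {p s : ℕ} (l : Fin s) : PIdx p s := .inr (.inr (.inr l))

/-- The trace of the block `H^α_s` of a matrix in the standard basis of `P^α(s)`, i.e. of the block
formed by the coefficients of the `a_l` in the images of the `b_i`. -/
def trH {p s : ℕ} (U : Matrix (PIdx p s) (PIdx p s) ℂ) : ℂ := ∑ i, U (ia i) (ib i)

variable {p s t m : ℕ} {α : ℂ}

lemma val_add_one_eq_iff_eq_top [NeZero s] {i : Fin s} : (i : ℕ) + 1 = s ↔ i = ⊤ := by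
  rw [Fin.ext_iff, Fin.val_top]
  have := NeZero.pos s
  omega

lemma mul_PF_apply_ib_castSucc (U : Matrix (PIdx p (m + 1)) (PIdx p (m + 1)) ℂ)
    (z : PIdx p (m + 1)) (i : Fin m) : (U * PF p (m + 1)) z (ib i.castSucc) = U z (ib i.succ) := by
  refine mul_apply_of_col_eq_single ?_ U z
  rintro (_ | _ | _ | _) <;> simp only [PF, Matrix.of_apply]
  · simp [Fin.ext_iff]
  · simp
  · simp [i.2.ne]
  · simp

lemma mul_PF_apply_ib_top [NeZero s] [NeZero (p - s)] (U : Matrix (PIdx p s) (PIdx p s) ℂ)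
    (z : PIdx p s) : (U * PF p s) z (ib ⊤) = U z (iy 0) := by
  refine mul_apply_of_col_eq_single ?_ U z
  rintro (i | _ | _ | _) <;> simp only [PF, Matrix.of_apply, val_add_one_eq_iff_eq_top]
  · simp [Nat.sub_add_cancel (NeZero.one_le (n := s)), i.2.ne]
  · simp
  · simp
  · simp

lemma PF_mul_apply_ia_succ (U : Matrix (PIdx p (m + 1)) (PIdx p (m + 1)) ℂ)
    (z : PIdx p (m + 1)) (i : Fin m) : (PF p (m + 1) * U) (ia i.succ) z = U (ia i.castSucc) z := by
  refine mul_apply_of_row_eq_single ?_ U z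
  rintro (_ | _ | _ | _) <;> simp only [PF, Matrix.of_apply]
  · simp
  · simp
  · simp
  · simp [Fin.ext_iff, eq_comm]

lemma PF_mul_apply_ia_zero [NeZero s] [NeZero (p - s)] (U : Matrix (PIdx p s) (PIdx p s) ℂ)
    (z : PIdx p s) : (PF p s * U) (ia 0) z = U (ix ⊤) z := by
  refine mul_apply_of_row_eq_single ?_ U z
  rintro (_ | _ | _ | _) <;> simp only [PF, Matrix.of_apply, val_add_one_eq_iff_eq_top]
  · simp
  · simp
  · simp
  · simp

lemma trH_mul_PF_sub_trH_PF_mul [NeZero s] [NeZero (p - s)]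
    (U : Matrix (PIdx p s) (PIdx p s) ℂ) :
    trH (U * PF p s) - trH (PF p s * U) = U (ia ⊤) (iy 0) - U (ix ⊤) (ib 0) := by
  obtain ⟨m, rfl⟩ := Nat.exists_eq_succ_of_ne_zero (NeZero.ne s)
  rw [trH, trH, Fin.sum_univ_castSucc, Fin.sum_univ_succ (n := m), ← Fin.top_eq_last,
    mul_PF_apply_ib_top, PF_mul_apply_ia_zero]
  simp only [Nat.succ_eq_add_one, mul_PF_apply_ib_castSucc, PF_mul_apply_ia_succ]
  ring

lemma trH_mul_PK (α : ℂ) (U : Matrix (PIdx p s) (PIdx p s) ℂ) :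
    trH (U * PK p α s) = trH (PK p α s * U) := by
  simp only [trH, PK, Matrix.mul_diagonal, Matrix.diagonal_mul, PKdiag, mul_comm]

lemma trH_PK_pow (α : ℂ) (n : ℕ) : trH (PK p α s ^ n) = 0 := by
  simp [trH, PK, Matrix.diagonal_pow]

/-- The homomorphism `P^{-α}(t) → P^α(s)`, for `s + t = p`, with `b_i ↦ y_i`, `x_j ↦ a_j` and
`y_k, a_l ↦ 0`. -/
def swapHom (p s t : ℕ) : Matrix (PIdx p s) (PIdx p t) ℂ :=
  Matrix.of fun i j =>
    match i, j with
    | .inr (.inr (.inl k)), .inl i => if (k : ℕ) = i then 1 else 0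
    | .inr (.inr (.inr l)), .inr (.inl j) => if (l : ℕ) = j then 1 else 0
    | _, _ => 0

section swapHom

variable {ι : Type*}

lemma mul_swapHom_apply_ib (h : t = p - s) (U : Matrix ι (PIdx p s) ℂ) (z : ι) (i : Fin t) :
    (U * swapHom p s t) z (ib i) = U z (iy (i.cast h)) :=
  mul_apply_of_col_eq_single (by rintro (_ | _ | _ | _) <;> simp [swapHom, Fin.ext_iff]) U z

lemma mul_swapHom_apply_ix (h : p - t = s) (U : Matrix ι (PIdx p s) ℂ) (z : ι) (j : Fin (p - t)) :
    (U * swapHom p s t) z (ix j) = U z (ia (j.cast h)) :=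
  mul_apply_of_col_eq_single (by rintro (_ | _ | _ | _) <;> simp [swapHom, Fin.ext_iff]) U z

lemma mul_swapHom_apply_iy (U : Matrix ι (PIdx p s) ℂ) (z : ι) (k : Fin (p - t)) :
    (U * swapHom p s t) z (iy k) = 0 := by
  simp [Matrix.mul_apply, swapHom]

lemma mul_swapHom_apply_ia (U : Matrix ι (PIdx p s) ℂ) (z : ι) (l : Fin t) :
    (U * swapHom p s t) z (ia l) = 0 := by
  simp [Matrix.mul_apply, swapHom]

lemma swapHom_mul_apply_ib (U : Matrix (PIdx p t) ι ℂ) (i : Fin s) (z : ι) :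
    (swapHom p s t * U) (ib i) z = 0 := by
  simp [Matrix.mul_apply, swapHom]

lemma swapHom_mul_apply_ix (U : Matrix (PIdx p t) ι ℂ) (j : Fin (p - s)) (z : ι) :
    (swapHom p s t * U) (ix j) z = 0 := by
  simp [Matrix.mul_apply, swapHom]

lemma swapHom_mul_apply_iy (h : p - s = t) (U : Matrix (PIdx p t) ι ℂ) (k : Fin (p - s)) (z : ι) :
    (swapHom p s t * U) (iy k) z = U (ib (k.cast h)) z :=
  mul_apply_of_row_eq_single
    (by rintro (_ | _ | _ | _) <;> simp [swapHom, Fin.ext_iff, eq_comm]) U z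

lemma swapHom_mul_apply_ia (h : s = p - t) (U : Matrix (PIdx p t) ι ℂ) (l : Fin s) (z : ι) :
    (swapHom p s t * U) (ia l) z = U (ix (l.cast h)) z :=
  mul_apply_of_row_eq_single
    (by rintro (_ | _ | _ | _) <;> simp [swapHom, Fin.ext_iff, eq_comm]) U z

end swapHom

lemma PF_mul_swapHom (hst : s + t = p) : PF p s * swapHom p s t = swapHom p s t * PF p t := by
  obtain ⟨hs, ht⟩ : p - s = t ∧ p - t = s := by omega
  ext (_ | _ | _ | _) (_ | _ | _ | _) <;>
    simp [mul_swapHom_apply_ib hs.symm, mul_swapHom_apply_ix ht, mul_swapHom_apply_iy,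
      mul_swapHom_apply_ia, swapHom_mul_apply_ib, swapHom_mul_apply_ix, swapHom_mul_apply_iy hs,
      swapHom_mul_apply_ia ht.symm, PF, ht]

lemma PE_mul_swapHom (hst : s + t = p) (α : ℂ) :
    PE p α s * swapHom p s t = swapHom p s t * PE p (-α) t := by
  obtain ⟨hs, ht⟩ : p - s = t ∧ p - t = s := by omega
  obtain ⟨hs', ht'⟩ : (p : ℤ) - s = t ∧ (p : ℤ) - t = s := by omega
  ext (_ | _ | _ | _) (_ | _ | _ | _) <;>
    simp [mul_swapHom_apply_ib hs.symm, mul_swapHom_apply_ix ht, mul_swapHom_apply_iy,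
      mul_swapHom_apply_ia, swapHom_mul_apply_ib, swapHom_mul_apply_ix, swapHom_mul_apply_iy hs,
      swapHom_mul_apply_ia ht.symm, PE, ht, hs', ht']

lemma PK_mul_swapHom (hst : s + t = p) (α : ℂ) :
    PK p α s * swapHom p s t = swapHom p s t * PK p (-α) t := by
  obtain ⟨hs, ht⟩ : (p : ℤ) - s = t ∧ (p : ℤ) - t = s := by omega
  ext (_ | _ | _ | _) (_ | _ | _ | _) <;>
    simp only [PK, Matrix.diagonal_mul, Matrix.mul_diagonal, swapHom, Matrix.of_apply, zero_mul,
      mul_zero]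
  all_goals
    split_ifs with h
    · simp [PKdiag, hs, ht, h]
    · simp

/-- The statement that `ρ` is the representation on `P^α(s)`. -/
def IsPRepAt (p : ℕ) (α : ℂ) (s : ℕ) (ρ : Uq p →ₐ[ℂ] Matrix (PIdx p s) (PIdx p s) ℂ) : Prop :=
  ρ (KK p) = PK p α s ∧ ρ (EE p) = PE p α s ∧ ρ (FF p) = PF p s

variable {ρ : Uq p →ₐ[ℂ] Matrix (PIdx p s) (PIdx p s) ℂ}
  {σ : Uq p →ₐ[ℂ] Matrix (PIdx p t) (PIdx p t) ℂ}

lemma IsPRepAt.mul_swapHom (hp : 0 < p) (hst : s + t = p) (hρ : IsPRepAt p α s ρ)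
    (hσ : IsPRepAt p (-α) t σ) (u : Uq p) : ρ u * swapHom p s t = swapHom p s t * σ u := by
  refine mul_eq_mul_of_adjoin_eq_top (adjoin_EE_FF_KK hp) ?_ u
  rintro _ (rfl | rfl | rfl)
  · rw [hρ.2.1, hσ.2.1, PE_mul_swapHom hst]
  · rw [hρ.2.2, hσ.2.2, PF_mul_swapHom hst]
  · rw [hρ.1, hσ.1, PK_mul_swapHom hst]

lemma IsPRepAt.apply_ia_iy_eq [NeZero s] [NeZero t] [NeZero (p - s)] [NeZero (p - t)]
    (hp : 0 < p) (hst : s + t = p) (hρ : IsPRepAt p α s ρ) (hσ : IsPRepAt p (-α) t σ) (u : Uq p) :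
    ρ u (ia ⊤) (iy 0) = σ u (ix ⊤) (ib 0) := by
  obtain ⟨hs, ht⟩ : p - s = t ∧ p - t = s := by omega
  have entry_eq := congrFun₂ (hρ.mul_swapHom hp hst hσ u) (ia ⊤) (ib 0)
  rw [mul_swapHom_apply_ib hs.symm, swapHom_mul_apply_ia ht.symm] at entry_eq
  convert entry_eq using 3 <;> simp

end Projective

section GOf

variable {p s : ℕ} {ρP : (α : ℂ) → (s : ℕ) → (Uq p →ₐ[ℂ] Matrix (PIdx p s) (PIdx p s) ℂ)}

lemma GOf_apply (u : Uq p) : GOf p ρP s u = trH (ρP 1 s u) + trH (ρP (-1) (p - s) u) := by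
  simp only [GOf, LinearMap.add_apply, LinearMap.sum_apply, LinearMap.comp_apply, trH]
  rfl

lemma isTorusNull_GOf (hP : IsPRep p ρP) (hs : 1 ≤ s) (hs' : s ≤ p - 1) :
    IsTorusNull (GOf p ρP s) := by
  have h_pos : IsPRepAt p 1 s (ρP 1 s) := hP 1 (.inl rfl) s hs hs'
  have h_neg : IsPRepAt p (-1) (p - s) (ρP (-1) (p - s)) :=
    hP (-1) (.inr rfl) (p - s) (by omega) (by omega)
  refine ⟨fun u ↦ ?_, fun u ↦ ?_, fun j ↦ ?_⟩
  · have : NeZero s := ⟨by omega⟩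
    have : NeZero (p - s) := ⟨by omega⟩
    have : NeZero (p - (p - s)) := ⟨by omega⟩
    have entry_pos := h_pos.apply_ia_iy_eq (by omega) (by omega) h_neg u
    have h_pos' : IsPRepAt p (- -1) s (ρP 1 s) := by rwa [neg_neg]
    have entry_neg := h_neg.apply_ia_iy_eq (by omega) (by omega) h_pos' u
    rw [GOf_apply, GOf_apply, map_mul, map_mul, map_mul, map_mul, h_pos.2.2, h_neg.2.2]
    linear_combination trH_mul_PF_sub_trH_PF_mul (ρP 1 s u) +
      trH_mul_PF_sub_trH_PF_mul (ρP (-1) (p - s) u) + entry_pos + entry_neg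
  · rw [GOf_apply, GOf_apply, map_mul, map_mul, map_mul, map_mul, h_pos.1, h_neg.1, trH_mul_PK,
      trH_mul_PK]
  · obtain ⟨n, hn⟩ := exists_KK_pow_eq_Kz (p := p) (by omega) j
    rw [← hn, GOf_apply, map_pow, map_pow, h_pos.1, h_neg.1, trH_PK_pow, trH_PK_pow, add_zero]

end GOf


/-- in `SLF(Ū_q)`, `G_s G_t = 0` for all `1 ≤ s, t ≤ p-1`. -/
theorem statement_15 (p : ℕ) (hp : 2 ≤ p)
    (ρP : (α : ℂ) → (s : ℕ) → (Uq p →ₐ[ℂ] Matrix (PIdx p s) (PIdx p s) ℂ))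
    (hP : IsPRep p ρP)
    (Δ : Uq p →ₐ[ℂ] (Uq p ⊗[ℂ] Uq p)) (hΔ : IsCoprod p Δ) :
    ∀ s t : ℕ, 1 ≤ s → s ≤ p - 1 → 1 ≤ t → t ≤ p - 1 →
      conv p Δ (GOf p ρP s) (GOf p ρP t) = 0 := by
  intro s t hs hs' ht ht'
  have hGs : IsTorusNull (GOf p ρP s) := isTorusNull_GOf hP hs hs'
  have hGt : IsTorusNull (GOf p ρP t) := isTorusNull_GOf hP ht ht'
  exact hGs.conv_eq_zero hΔ hp hGt

end Uqsl2
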